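/- (Unbiasedness of the CG-DSGLD estimator.) Let S, d, m be positive integers, f : Fin S → ℝ with f s > 0 and ∑_s f s = 1, for each s let N_s be a positive integer and v_{s,1}, …, v_{s,N_s} ∈ ℝ^d, and let u_1, …, u_S ∈ ℝ^d. Then ∑_{s=1}^{S} f s · (1/N_s^m) ∑_{φ : Fin m → Fin N_s} [ (N_s/(f s · m)) ∑_{j=1}^{m} v_{s, φ(j)} + ∑_{s'=1}^{S} u_{s'} − (1/(f s)) u_s ] = ∑_{s=1}^{S} ∑_{i=1}^{N_s} v_{s,i}. That is, adding the conducive gradient g_s = ∑_{s'} u_{s'} − (1/(f s)) u_s to the DSGLD mini-batch estimator yields an unbiased estimator of the full-data gradient. -/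

import Mathlib

/-!
Each draw `φ j` is uniform on its shard, so the mean of a mini-batch sum is `m` times the shard
mean; the factor `N_s / (f s * m)` turns this into the shard gradient divided by `f s`, and the
selection probability cancels `f s`. The conducive gradient does not depend on the mini-batch, and
since `f s • g_s = f s • ∑ s', u s' - u s`, its mean over the shards is zero.
-/

open Finset
open scoped BigOperators

section Resampling

variable {J ι M : Type*} [Fintype J] [DecidableEq J] [Fintype ι] [AddCommMonoid M] [Module ℚ≥0 M]

theorem expect_pi_eq_smul_sum (K : Type*) [DivisionSemiring K] [Module K M] (X : (J → ι) → M) :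
    𝔼 φ, X φ = (1 / (Fintype.card ι : K) ^ Fintype.card J) • ∑ φ, X φ := by
  rw [expect, card_univ, Fintype.card_fun, inv_natCast_smul_eq ℚ≥0 K, Nat.cast_pow, one_div]

variable [Nonempty ι]

theorem expect_pi_apply (g : ι → M) (j : J) : 𝔼 φ : J → ι, g (φ j) = 𝔼 i, g i := by
  have hsum : ∑ φ : J → ι, g (φ j) = Fintype.card ι ^ (Fintype.card J - 1) • ∑ i, g i := by
    simpa using Fintype.sum_piFinset_apply g univ j
  have hcard : Fintype.card ι ^ (Fintype.card J - 1) * Fintype.card ι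
      = Fintype.card (J → ι) := by
    rw [Fintype.card_fun, pow_sub_one_mul (Fintype.card_pos_iff.mpr ⟨j⟩).ne']
  rw [expect, hsum, ← Fintype.card_smul_expect, smul_smul, hcard, ← Nat.cast_smul_eq_nsmul ℚ≥0,
    card_univ, inv_smul_smul₀ (Nat.cast_ne_zero.mpr Fintype.card_ne_zero)]

theorem expect_pi_sum_apply (g : ι → M) :
    𝔼 φ : J → ι, ∑ j, g (φ j) = Fintype.card J • 𝔼 i, g i := by
  simp_rw [expect_sum_comm, expect_pi_apply, sum_const, card_univ]

end Resampling

section Estimators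

variable {K E σ J : Type*} [Field K] [AddCommGroup E] [Module K E] [Fintype J]

/-- The DSGLD mini-batch estimator of the full-data gradient: `v` lists the gradients of a shard
selected with probability `p`, and `φ` lists the indices drawn from that shard, so that
`Fintype.card J` is the mini-batch size. -/
def dsgldEstimator {ι : Type*} [Fintype ι] (p : K) (v : ι → E) (φ : J → ι) : E :=
  ((Fintype.card ι : K) / (p * Fintype.card J)) • ∑ j, v (φ j)

/-- The conducive gradient `g_s`, the correction that is added to the DSGLD estimator when shard `s`
is selected, for selection probabilities `f` and surrogate gradients `u`. -/
def conduciveGradient [Fintype σ] (f : σ → K) (u : σ → E) (s : σ) : E :=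
  ∑ s', u s' - (1 / f s) • u s

theorem smul_expect_dsgldEstimator {ι : Type*} [Fintype ι] [Nonempty ι] [Nonempty J]
    [DecidableEq J] [CharZero K] [Module ℚ≥0 E] {p : K} (hp : p ≠ 0) (v : ι → E) :
    p • 𝔼 φ : J → ι, dsgldEstimator p v φ = ∑ i, v i := by
  have hscale : p * ((Fintype.card ι : K) / (p * Fintype.card J)) * Fintype.card J
      = Fintype.card ι := by
    field_simp
  simp_rw [dsgldEstimator]
  rw [← smul_expect, expect_pi_sum_apply, ← Nat.cast_smul_eq_nsmul K, smul_smul, smul_smul, hscale,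
    Nat.cast_smul_eq_nsmul, Fintype.card_smul_expect]

theorem sum_smul_conduciveGradient [Fintype σ] {f : σ → K} (hf : ∀ s, f s ≠ 0)
    (hsum : ∑ s, f s = 1) (u : σ → E) : ∑ s, f s • conduciveGradient f u s = 0 := by
  have hsmul (s : σ) : f s • conduciveGradient f u s = f s • ∑ s', u s' - u s := by
    rw [conduciveGradient, smul_sub, one_div, smul_inv_smul₀ (hf s)]
  simp_rw [hsmul, sum_sub_distrib, ← sum_smul, hsum, one_smul, sub_self]

theorem cgdsgld_unbiased_general [Fintype σ] {ι : σ → Type*} [∀ s, Fintype (ι s)]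
    [∀ s, Nonempty (ι s)] [Nonempty J] [DecidableEq J] [CharZero K] [Module ℚ≥0 E]
    {f : σ → K} (hf : ∀ s, f s ≠ 0) (hsum : ∑ s, f s = 1) (v : (s : σ) → ι s → E) (u : σ → E) :
    ∑ s, f s • 𝔼 φ : J → ι s, (dsgldEstimator (f s) (v s) φ + conduciveGradient f u s)
      = ∑ s, ∑ i, v s i := by
  simp_rw [expect_add_distrib, Fintype.expect_const, smul_add, sum_add_distrib,
    smul_expect_dsgldEstimator (hf _), sum_smul_conduciveGradient hf hsum, add_zero]

end Estimators

/-- Unbiasedness of the CG-DSGLD estimator: adding the conducive gradient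
`g_s = ∑_{s'} u_{s'} - (1 / f s) • u s` to the DSGLD mini-batch estimator yields an
unbiased estimator of the full-data gradient. -/
theorem cgdsgld_unbiased (S d m : ℕ) (hS : 0 < S) (hd : 0 < d) (hm : 0 < m)
    (f : Fin S → ℝ) (hf : ∀ s, 0 < f s) (hsum : ∑ s, f s = 1)
    (N : Fin S → ℕ) (hN : ∀ s, 0 < N s)
    (v : (s : Fin S) → Fin (N s) → EuclideanSpace ℝ (Fin d))
    (u : Fin S → EuclideanSpace ℝ (Fin d)) :
    ∑ s, f s • ((1 / (N s : ℝ) ^ m) •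
        ∑ φ : Fin m → Fin (N s),
          (((N s : ℝ) / (f s * m)) • ∑ j, v s (φ j))
            + (∑ s', u s') - (1 / f s) • u s)
      = ∑ s, ∑ i, v s i := by
  have : Nonempty (Fin m) := Fin.pos_iff_nonempty.mp hm
  have (s : Fin S) : Nonempty (Fin (N s)) := Fin.pos_iff_nonempty.mp (hN s)
  have hmean := cgdsgld_unbiased_general (J := Fin m) (fun s ↦ (hf s).ne') hsum v u
  simp only [expect_add_distrib, Fintype.expect_const] at hmean
  -- In the goal `∑ φ` binds only the mini-batch term: the conducive gradient is outside the mean.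
  simpa only [expect_pi_eq_smul_sum ℝ, dsgldEstimator, conduciveGradient, Fintype.card_fin,
    add_sub_assoc] using hmean
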